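/- arXiv:2603.27072 — 2 statements merged into one kernel-verified Lean document; each statement's English description precedes it below -/
import Mathlib

section
/- Let L ≥ 3 be an integer, λ > 0, q := 2/L, and let φ_m(ρ) := (m − ρ)² + λ|ρ|^q for ρ ∈ ℝ, with threshold τ := (1 − q/2)·λ^{1/(2−q)}·(1 − q)^{(q−1)/(2−q)}. If |m| = τ (in particular m ≠ 0), then the set of global minimizers of φ_m over ℝ is exactly the two-point set {0, sign(m)·(λ(1 − q))^{1/(2−q)}}. -/
/-- `φ_m(ρ) = (m − ρ)² + λ|ρ|^q`. -/
noncomputable def phi (m lam q ρ : ℝ) : ℝ := (m - ρ) ^ 2 + lam * |ρ| ^ q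

/-!
Reflecting `ρ` so that it has the sign of `m` can only decrease `φ_m`, which reduces the problem to
`m = τ` and `ρ ≥ 0`. Writing `ρ = t r` with `r = (λ(1 - q))^{1/(2-q)}`, the difference
`φ_τ(ρ) - τ²` is a positive multiple of `t (t^{q-1} - (1 + (q-1)(t-1)))`. By the strict Bernoulli
inequality for the negative exponent `q - 1`, it is nonnegative and vanishes only at `t = 0` and
`t = 1`.
-/

theorem one_add_mul_sub_one_lt_rpow_of_neg {s t : ℝ} (hs : s < 0) (ht : 0 < t) (ht1 : t ≠ 1) :
    1 + s * (t - 1) < t ^ s :=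
  calc
    1 + s * (t - 1) < 1 + s * Real.log t := by
      gcongr 1 + ?_
      exact mul_lt_mul_of_neg_left (Real.log_lt_sub_one_of_pos ht ht1) hs
    _ ≤ Real.exp (Real.log t * s) := by
      linarith [Real.add_one_le_exp (Real.log t * s)]
    _ = t ^ s := (Real.rpow_def_of_pos ht s).symm

theorem eq_sign_mul_iff {m x r : ℝ} (hm : m ≠ 0) (hr : 0 ≤ r) :
    x = Real.sign m * r ↔ |x| = r ∧ 0 ≤ m * x := by
  rcases hm.lt_or_gt with hneg | hpos
  · rw [Real.sign_of_neg hneg, neg_one_mul, ← neg_mul_neg m,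
      mul_nonneg_iff_of_pos_left (neg_pos.2 hneg), neg_nonneg]
    constructor
    · rintro rfl
      exact ⟨by rw [abs_neg, abs_of_nonneg hr], neg_nonpos.2 hr⟩
    · rintro ⟨rfl, hx⟩
      rw [abs_of_nonpos hx, neg_neg]
  · rw [Real.sign_of_pos hpos, one_mul, mul_nonneg_iff_of_pos_left hpos]
    constructor
    · rintro rfl
      exact ⟨abs_of_nonneg hr, hr⟩
    · rintro ⟨rfl, hx⟩
      rw [abs_of_nonneg hx]

theorem setOf_forall_le_eq_setOf_eq {α β : Type*} [PartialOrder β] {f : α → β} {a : α}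
    (ha : ∀ x, f a ≤ f x) : {x | ∀ y, f x ≤ f y} = {x | f x = f a} :=
  Set.ext fun x => ⟨fun hx => (hx a).antisymm (ha x), fun hx y => hx.trans_le (ha y)⟩

/-- The threshold `τ`: the value of `|m|` at which `0` and a nonzero point both minimize `φ_m`. -/
noncomputable def threshold (lam q : ℝ) : ℝ :=
  (1 - q / 2) * lam ^ (1 / (2 - q)) * (1 - q) ^ ((q - 1) / (2 - q))

/-- The modulus `(λ(1 - q))^{1/(2-q)}` of the nonzero minimizer of `φ_m` when `|m|` is the
threshold. -/
noncomputable def jumpPoint (lam q : ℝ) : ℝ := (lam * (1 - q)) ^ (1 / (2 - q))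

theorem phi_zero {q : ℝ} (hq : q ≠ 0) (m lam : ℝ) : phi m lam q 0 = m ^ 2 := by
  rw [phi, abs_zero, Real.zero_rpow hq, mul_zero, add_zero, sub_zero]

theorem phi_eq_phi_abs_add (m lam q ρ : ℝ) :
    phi m lam q ρ = phi |m| lam q |ρ| + 2 * (|m * ρ| - m * ρ) := by
  rw [phi, phi, abs_abs, abs_mul]
  linear_combination -sq_abs m - sq_abs ρ

section Threshold

variable {lam q : ℝ}

theorem threshold_pos (hlam : 0 < lam) (hq : q < 1) : 0 < threshold lam q := by
  have hq2 : 0 < 1 - q / 2 := by linarith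
  exact mul_pos (mul_pos hq2 (Real.rpow_pos_of_pos hlam _))
    (Real.rpow_pos_of_pos (sub_pos.2 hq) _)

theorem jumpPoint_pos (hlam : 0 < lam) (hq : q < 1) : 0 < jumpPoint lam q :=
  Real.rpow_pos_of_pos (mul_pos hlam (sub_pos.2 hq)) _

theorem two_mul_threshold_mul_one_sub (hlam : 0 ≤ lam) (hq : q < 1) :
    2 * threshold lam q * (1 - q) = (2 - q) * jumpPoint lam q := by
  have hq' : 0 < 1 - q := sub_pos.2 hq
  have hq2 : 2 - q ≠ 0 := by linarith
  have rpow_mul_self : (1 - q) ^ ((q - 1) / (2 - q)) * (1 - q) = (1 - q) ^ (1 / (2 - q)) := by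
    rw [← Real.rpow_add_one hq'.ne']
    congr 1
    field_simp
    ring
  rw [threshold, jumpPoint, Real.mul_rpow hlam hq'.le, ← rpow_mul_self]
  ring

theorem mul_jumpPoint_rpow (hlam : 0 < lam) (hq : q < 1) :
    lam * (1 - q) * jumpPoint lam q ^ q = jumpPoint lam q ^ 2 := by
  have hq2 : 2 - q ≠ 0 := by linarith
  have base_nonneg : 0 ≤ lam * (1 - q) := mul_nonneg hlam.le (sub_nonneg.2 hq.le)
  have jumpPoint_rpow : jumpPoint lam q ^ (2 - q) = lam * (1 - q) := by
    rw [jumpPoint, one_div, Real.rpow_inv_rpow base_nonneg hq2]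
  rw [← jumpPoint_rpow, ← Real.rpow_add (jumpPoint_pos hlam hq), sub_add_cancel, Real.rpow_two]

theorem one_sub_mul_phi_threshold_sub_sq (hlam : 0 < lam) (hq : q < 1) {t : ℝ} (ht : 0 < t) :
    (1 - q) * (phi (threshold lam q) lam q (t * jumpPoint lam q) - threshold lam q ^ 2) =
      jumpPoint lam q ^ 2 * t * (t ^ (q - 1) - (1 + (q - 1) * (t - 1))) := by
  have hr := jumpPoint_pos hlam hq
  have rpow_eq : t ^ q = t ^ (q - 1) * t := by
    rw [← Real.rpow_add_one ht.ne', sub_add_cancel]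
  rw [phi, abs_of_pos (mul_pos ht hr), Real.mul_rpow ht.le hr.le, rpow_eq]
  linear_combination t ^ (q - 1) * t * mul_jumpPoint_rpow hlam hq -
    t * jumpPoint lam q * two_mul_threshold_mul_one_sub hlam.le hq

theorem phi_threshold_jumpPoint (hlam : 0 < lam) (hq : q < 1) :
    phi (threshold lam q) lam q (jumpPoint lam q) = threshold lam q ^ 2 := by
  have gap_eq_zero := one_sub_mul_phi_threshold_sub_sq hlam hq one_pos
  rw [one_mul, Real.one_rpow, sub_self, mul_zero, add_zero, sub_self, mul_zero] at gap_eq_zero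
  exact sub_eq_zero.1 ((mul_eq_zero_iff_left (sub_pos.2 hq).ne').1 gap_eq_zero)

theorem sq_threshold_lt_phi (hlam : 0 < lam) (hq : q < 1) {r : ℝ} (hr : 0 < r)
    (hne : r ≠ jumpPoint lam q) :
    threshold lam q ^ 2 < phi (threshold lam q) lam q r := by
  have hr₀ := jumpPoint_pos hlam hq
  obtain ⟨t, rfl⟩ : ∃ t, r = t * jumpPoint lam q := ⟨_, (div_mul_cancel₀ r hr₀.ne').symm⟩
  have ht : 0 < t := pos_of_mul_pos_left hr hr₀.le
  have ht1 : t ≠ 1 := fun h => hne (by rw [h, one_mul])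
  have bernoulli_gap_pos : 0 < t ^ (q - 1) - (1 + (q - 1) * (t - 1)) :=
    sub_pos.2 (one_add_mul_sub_one_lt_rpow_of_neg (sub_neg.2 hq) ht ht1)
  refine sub_pos.1 (pos_of_mul_pos_right ?_ (sub_pos.2 hq).le)
  rw [one_sub_mul_phi_threshold_sub_sq hlam hq ht]
  positivity

theorem sq_threshold_le_phi (hlam : 0 < lam) (hq0 : q ≠ 0) (hq1 : q < 1) {r : ℝ} (hr : 0 ≤ r) :
    threshold lam q ^ 2 ≤ phi (threshold lam q) lam q r := by
  rcases hr.eq_or_lt with rfl | hpos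
  · exact (phi_zero hq0 _ _).ge
  · by_cases h : r = jumpPoint lam q
    · rw [h, phi_threshold_jumpPoint hlam hq1]
    · exact (sq_threshold_lt_phi hlam hq1 hpos h).le

theorem phi_threshold_eq_sq_iff (hlam : 0 < lam) (hq0 : q ≠ 0) (hq1 : q < 1) {r : ℝ}
    (hr : 0 ≤ r) :
    phi (threshold lam q) lam q r = threshold lam q ^ 2 ↔ r = 0 ∨ r = jumpPoint lam q := by
  constructor
  · intro heq
    by_contra! hne
    exact (sq_threshold_lt_phi hlam hq1 (hr.lt_of_ne' hne.1) hne.2).ne' heq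
  · rintro (rfl | rfl)
    · exact phi_zero hq0 _ _
    · exact phi_threshold_jumpPoint hlam hq1

variable {m : ℝ}

theorem sq_le_phi_of_abs_eq_threshold (hlam : 0 < lam) (hq0 : q ≠ 0) (hq1 : q < 1)
    (hm : |m| = threshold lam q) (ρ : ℝ) : m ^ 2 ≤ phi m lam q ρ := by
  have radial := sq_threshold_le_phi hlam hq0 hq1 (abs_nonneg ρ)
  rw [← hm, sq_abs] at radial
  rw [phi_eq_phi_abs_add]
  linarith [le_abs_self (m * ρ)]

theorem phi_eq_sq_iff_of_abs_eq_threshold (hlam : 0 < lam) (hq0 : q ≠ 0) (hq1 : q < 1)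
    (hm : |m| = threshold lam q) (ρ : ℝ) :
    phi m lam q ρ = m ^ 2 ↔ ρ = 0 ∨ ρ = Real.sign m * jumpPoint lam q := by
  have hm0 : m ≠ 0 := abs_pos.1 (hm ▸ threshold_pos hlam hq1)
  have radial_le := sq_threshold_le_phi hlam hq0 hq1 (abs_nonneg ρ)
  have radial_eq_iff := phi_threshold_eq_sq_iff hlam hq0 hq1 (abs_nonneg ρ)
  rw [← hm, sq_abs] at radial_le radial_eq_iff
  have eq_sq_iff : phi m lam q ρ = m ^ 2 ↔ phi |m| lam q |ρ| = m ^ 2 ∧ 0 ≤ m * ρ := by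
    rw [phi_eq_phi_abs_add, ← abs_eq_self]
    have := le_abs_self (m * ρ)
    constructor
    · intro h
      constructor <;> linarith
    · rintro ⟨hradial, hsign⟩
      rw [hradial, hsign, sub_self, mul_zero, add_zero]
  rw [eq_sq_iff, radial_eq_iff, eq_sign_mul_iff hm0 (jumpPoint_pos hlam hq1).le, abs_eq_zero,
    or_and_right, and_iff_left_of_imp]
  rintro rfl
  rw [mul_zero]

theorem stmt2_general (hlam : 0 < lam) (hq0 : 0 < q) (hq1 : q < 1)
    (hm : |m| = threshold lam q) :
    {ρ : ℝ | ∀ x : ℝ, phi m lam q ρ ≤ phi m lam q x} =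
      {0, Real.sign m * jumpPoint lam q} := by
  have zero_minimizes : ∀ x, phi m lam q 0 ≤ phi m lam q x := fun x =>
    (phi_zero hq0.ne' m lam).trans_le (sq_le_phi_of_abs_eq_threshold hlam hq0.ne' hq1 hm x)
  rw [setOf_forall_le_eq_setOf_eq zero_minimizes, phi_zero hq0.ne']
  ext ρ
  exact phi_eq_sq_iff_of_abs_eq_threshold hlam hq0.ne' hq1 hm ρ

end Threshold

/-- For `L ≥ 3`, `λ > 0`, `q = 2/L` and threshold
`τ = (1 − q/2)·λ^{1/(2−q)}·(1 − q)^{(q−1)/(2−q)}`: if `|m| = τ`, then the set of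
global minimizers of `φ_m` over `ℝ` is exactly `{0, sign(m)·(λ(1 − q))^{1/(2−q)}}`. -/
theorem stmt2 (L : ℕ) (hL : 3 ≤ L) (lam : ℝ) (hlam : 0 < lam) (m q τ : ℝ)
    (hq : q = 2 / L)
    (hτ : τ = (1 - q / 2) * lam ^ (1 / (2 - q)) * (1 - q) ^ ((q - 1) / (2 - q)))
    (hm : |m| = τ) :
    {ρ : ℝ | ∀ x : ℝ, phi m lam q ρ ≤ phi m lam q x} =
      {0, Real.sign m * (lam * (1 - q)) ^ (1 / (2 - q))} := by
  have hL' : (2 : ℝ) < L := by exact_mod_cast hL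
  have hq0 : 0 < q := by rw [hq]; positivity
  have hq1 : q < 1 := by rw [hq]; exact (div_lt_one (by linarith)).2 hL'
  exact stmt2_general hlam hq0 hq1 (hm.trans hτ)
end

section
/- Let L ≥ 3 be an integer, λ > 0, q := 2/L, and consider the ℓ²-regularized deep scalar factorization objective 𝓛(w) := (m − w_L·w_{L−1}···w_1)² + (λ/L)·Σ_{i=1}^L w_i² for w = (w_1, …, w_L) ∈ ℝ^L. Suppose |m| > τ, where τ := (1 − q/2)·λ^{1/(2−q)}·(1 − q)^{(q−1)/(2−q)}. Then for every global minimizer w* ∈ ℝ^L of 𝓛, the value w := |w*_1| is the same for all global minimizers, and the L×L Hessian matrix H of 𝓛 at w*, with entries H_{jk} = ∂²𝓛/∂w_j∂w_k(w*), has characteristic polynomial det(x·I − H) = (x − 4λ/L)^{L−1} · (x − (2L·w^{2L−2} + 4λ/L − 2λ)); that is, H has eigenvalue 4λ/L with multiplicity L−1 and eigenvalue 2L·w^{2L−2} + 4λ/L − 2λ with multiplicity 1, so the Hessian spectrum is constant across all global minimizers. -/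
/-- The ℓ²-regularized deep scalar factorization objective
`𝓛(w) = (m − w_L ⋯ w_1)² + (λ/L) ∑ᵢ wᵢ²`. -/
noncomputable def scalarLoss (m lam : ℝ) (L : ℕ) (w : Fin L → ℝ) : ℝ :=
  (m - ∏ i, w i) ^ 2 + (lam / L) * ∑ i, (w i) ^ 2

/-!
The first-order conditions, multiplied by `w k`, read `(m - P) * P = (λ / L) * w k ^ 2` with
`P = ∏ i, w i`, so all `|w k|` agree at a local minimum and `m * P ≥ 0`: the loss there is
`F r = (|m| - r ^ L) ^ 2 + λ * r ^ 2` with `r = |w k|`. If `c < m ^ 2` is the minimum of `F`, the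
positive minimizers of `F` are those of `(F x - c) / x ^ L`, which is strictly convex on `(0, ∞)`
because the coefficient `m ^ 2 - c` of `x ^ (-L)` is positive; so `r` is unique. At such a point
the first-order conditions turn the Hessian into a multiple of the identity plus a rank-one matrix.
The condition `|m| > τ` ensures that `0` does not minimize the loss.
-/

open Finset Matrix Polynomial

lemma charpoly_vecMulVec_add_scalar {n R : Type*} [Fintype n] [DecidableEq n] [Nonempty n]
    [CommRing R] (u v : n → R) (a : R) :
    (vecMulVec u v + scalar n a).charpoly =
      (X - C a) ^ (Fintype.card n - 1) * (X - C (u ⬝ᵥ v + a)) := by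
  have hshift : vecMulVec u v + scalar n a = vecMulVec u v - scalar n (-a) := by
    rw [map_neg, sub_neg_eq_add]
  have hcard : Fintype.card n = Fintype.card n - 1 + 1 := by
    have := Fintype.card_pos (α := n)
    omega
  rw [hshift, charpoly_sub_scalar, charpoly_vecMulVec]
  nth_rw 1 [hcard]
  simp only [pow_succ, smul_eq_C_mul, sub_comp, mul_comp, pow_comp, X_comp, C_comp, map_neg,
    map_add]
  ring

lemma strictConvexOn_const_mul {𝕜 E : Type*} [CommSemiring 𝕜] [PartialOrder 𝕜]
    [IsStrictOrderedRing 𝕜] [AddCommMonoid E] [SMul 𝕜 E] {s : Set E} {f : E → 𝕜} {c : 𝕜}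
    (hf : StrictConvexOn 𝕜 s f) (hc : 0 < c) : StrictConvexOn 𝕜 s fun x => c * f x := by
  refine ⟨hf.1, fun x hx y hy hxy a b ha hb hab => ?_⟩
  calc c * f (a • x + b • y)
      < c * (a • f x + b • f y) := mul_lt_mul_of_pos_left (hf.2 hx hy hxy ha hb hab) hc
    _ = a • (c * f x) + b • (c * f y) := by
        simp only [smul_eq_mul]
        ring

section Hessian

variable {ι : Type*} [DecidableEq ι]

/-- The Hessian matrix of `f : ℝ^ι → ℝ` at `w`, as iterated derivatives along coordinate lines
(each `deriv` is `0` where the derivative does not exist). -/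
noncomputable def hessianMatrix (f : (ι → ℝ) → ℝ) (w : ι → ℝ) : Matrix ι ι ℝ :=
  Matrix.of fun j k => deriv (fun s : ℝ => deriv (fun t : ℝ =>
    f (w + s • (Pi.single j 1 : ι → ℝ) + t • (Pi.single k 1 : ι → ℝ))) 0) 0

lemma hasDerivAt_add_smul_single_apply (w : ι → ℝ) (j i : ι) (x : ℝ) :
    HasDerivAt (fun t : ℝ => (w + t • (Pi.single j 1 : ι → ℝ)) i)
      ((Pi.single j 1 : ι → ℝ) i) x := by
  simpa using ((hasDerivAt_id x).mul_const ((Pi.single j 1 : ι → ℝ) i)).const_add (w i)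

lemma hasDerivAt_prod_add_smul_single (s : Finset ι) (w : ι → ℝ) (j : ι) :
    HasDerivAt (fun t : ℝ => ∏ i ∈ s, (w + t • (Pi.single j 1 : ι → ℝ)) i)
      (if j ∈ s then ∏ i ∈ s.erase j, w i else 0) 0 := by
  refine (HasDerivAt.fun_finsetProd
    fun i _ => hasDerivAt_add_smul_single_apply w j i 0).congr_deriv ?_
  simp [Pi.single_apply]

lemma hasDerivAt_sum_sq_add_smul_single [Fintype ι] (w : ι → ℝ) (j : ι) :
    HasDerivAt (fun t : ℝ => ∑ i, (w + t • (Pi.single j 1 : ι → ℝ)) i ^ 2) (2 * w j) 0 := by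
  refine (HasDerivAt.fun_sum
    fun i _ => (hasDerivAt_add_smul_single_apply w j i 0).fun_pow 2).congr_deriv ?_
  simp [Pi.single_apply]

end Hessian

section ScalarLoss

variable {m lam : ℝ} {L : ℕ} {w : Fin L → ℝ}

lemma scalarLoss_zero (hL : L ≠ 0) : scalarLoss m lam L 0 = m ^ 2 := by
  simp [scalarLoss, hL]

lemma hasDerivAt_scalarLoss_add_smul_single (m lam : ℝ) (w : Fin L → ℝ) (k : Fin L) :
    HasDerivAt (fun t : ℝ => scalarLoss m lam L (w + t • (Pi.single k 1 : Fin L → ℝ)))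
      (2 * (lam / L * w k - (m - ∏ i, w i) * ∏ i ∈ univ.erase k, w i)) 0 := by
  have hprod := hasDerivAt_prod_add_smul_single univ w k
  have hsum := hasDerivAt_sum_sq_add_smul_single w k
  refine (((hprod.const_sub m).fun_pow 2).fun_add (hsum.const_mul (lam / L))).congr_deriv ?_
  simp only [mem_univ, if_true, zero_smul, add_zero, Nat.cast_ofNat, Nat.add_one_sub_one, pow_one]
  ring

lemma hessianMatrix_scalarLoss_apply (m lam : ℝ) (w : Fin L → ℝ) (j k : Fin L) :
    hessianMatrix (scalarLoss m lam L) w j k =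
      2 * (lam / L * (if j = k then 1 else 0) +
        (∏ i ∈ univ.erase j, w i) * (∏ i ∈ univ.erase k, w i) -
        (m - ∏ i, w i) * if j = k then 0 else ∏ i ∈ (univ.erase k).erase j, w i) := by
  have hcoord := hasDerivAt_add_smul_single_apply w j k 0
  have hprod := hasDerivAt_prod_add_smul_single univ w j
  have hprodErase := hasDerivAt_prod_add_smul_single (univ.erase k) w j
  simp only [hessianMatrix, of_apply, (hasDerivAt_scalarLoss_add_smul_single m lam _ k).deriv]
  rw [(((hcoord.const_mul (lam / L)).fun_sub
    ((hprod.const_sub m).fun_mul hprodErase)).const_mul 2).deriv]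
  rcases eq_or_ne j k with rfl | hjk
  · simp
  · simp only [hjk, hjk.symm, Pi.single_eq_of_ne, mem_erase, mem_univ, ne_eq, not_false_eq_true,
      and_self, if_true, if_false, zero_smul, add_zero, mul_zero]
    ring

lemma mul_prod_eq_of_isLocalMin_scalarLoss (hw : IsLocalMin (scalarLoss m lam L) w) (k : Fin L) :
    (m - ∏ i, w i) * ∏ i, w i = lam / L * w k ^ 2 := by
  have hline : Filter.Tendsto (fun t : ℝ => w + t • (Pi.single k 1 : Fin L → ℝ))
      (nhds 0) (nhds w) :=
    Continuous.tendsto' (by fun_prop) _ _ (by simp)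
  have hmin : IsLocalMin
      (fun t : ℝ => scalarLoss m lam L (w + t • (Pi.single k 1 : Fin L → ℝ))) 0 := by
    simpa [IsLocalMin, IsMinFilter] using hline.eventually hw
  have hgrad := hmin.hasDerivAt_eq_zero (hasDerivAt_scalarLoss_add_smul_single m lam w k)
  have hprod := mul_prod_erase univ w (mem_univ k)
  linear_combination (-w k / 2) * hgrad - (m - ∏ i, w i) * hprod

lemma abs_eq_abs_of_isLocalMin_scalarLoss (hlam : lam ≠ 0)
    (hw : IsLocalMin (scalarLoss m lam L) w) (j k : Fin L) : |w j| = |w k| := by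
  have hL : (L : ℝ) ≠ 0 := by exact_mod_cast j.pos.ne'
  have hsq := (mul_prod_eq_of_isLocalMin_scalarLoss hw j).symm.trans
    (mul_prod_eq_of_isLocalMin_scalarLoss hw k)
  exact (sq_eq_sq_iff_abs_eq_abs _ _).1 (mul_left_cancel₀ (div_ne_zero hlam hL) hsq)

lemma mul_prod_nonneg_of_isLocalMin_scalarLoss (hlam : 0 ≤ lam)
    (hw : IsLocalMin (scalarLoss m lam L) w) (k : Fin L) : 0 ≤ m * ∏ i, w i := by
  have hstat := mul_prod_eq_of_isLocalMin_scalarLoss hw k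
  have hnonneg : 0 ≤ lam / L * w k ^ 2 + (∏ i, w i) ^ 2 := by positivity
  linarith

lemma hessianMatrix_scalarLoss_of_isLocalMin (hw : IsLocalMin (scalarLoss m lam L) w)
    (hne : ∀ i, w i ≠ 0) :
    hessianMatrix (scalarLoss m lam L) w =
      vecMulVec ((2 * ((∏ i, w i) ^ 2 - (m - ∏ i, w i) * ∏ i, w i)) • w⁻¹) w⁻¹ +
        scalar (Fin L) (4 * lam / L) := by
  have herase (s : Finset (Fin L)) {i} (hi : i ∈ s) :
      ∏ l ∈ s.erase i, w l = (∏ l ∈ s, w l) / w i :=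
    eq_div_of_mul_eq (hne i) (prod_erase_mul s w hi)
  ext j k
  have hj := hne j
  have hk := hne k
  rw [hessianMatrix_scalarLoss_apply]
  by_cases hjk : j = k
  · subst hjk
    have hstat := mul_prod_eq_of_isLocalMin_scalarLoss hw j
    simp only [herase univ (mem_univ j), vecMulVec_apply, Matrix.add_apply, scalar_apply,
      diagonal_apply_eq, Pi.smul_apply, Pi.inv_apply, smul_eq_mul, if_true, hstat]
    field_simp
    ring
  · simp only [herase univ (mem_univ _), herase (univ.erase k) (mem_erase.2 ⟨hjk, mem_univ j⟩),
      vecMulVec_apply, Matrix.add_apply, scalar_apply, diagonal_apply_ne _ hjk, Pi.smul_apply,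
      Pi.inv_apply, smul_eq_mul, if_neg hjk]
    field_simp
    ring

theorem charpoly_hessianMatrix_scalarLoss_of_isLocalMin (hlam : lam ≠ 0)
    (hw : IsLocalMin (scalarLoss m lam L) w) {i₀ : Fin L} (hi₀ : w i₀ ≠ 0) :
    (hessianMatrix (scalarLoss m lam L) w).charpoly =
      (X - C (4 * lam / L)) ^ (L - 1) *
        (X - C (2 * L * |w i₀| ^ (2 * L - 2) + 4 * lam / L - 2 * lam)) := by
  have hL : L ≠ 0 := i₀.pos.ne'
  have : Nonempty (Fin L) := ⟨i₀⟩
  have habs (i) : |w i| = |w i₀| := abs_eq_abs_of_isLocalMin_scalarLoss hlam hw i i₀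
  have hr : 0 < |w i₀| := abs_pos.2 hi₀
  have hne (i) : w i ≠ 0 := abs_pos.1 (habs i ▸ hr)
  have hsq (i) : w i ^ 2 = |w i₀| ^ 2 := by rw [← sq_abs, habs]
  have hprodSq : (∏ i, w i) ^ 2 = |w i₀| ^ (2 * L - 2) * |w i₀| ^ 2 := by
    rw [← sq_abs, abs_prod, prod_congr rfl fun i _ => habs i, prod_const, card_univ,
      Fintype.card_fin, ← pow_mul, ← pow_add]
    congr 1
    omega
  have hdot (c : ℝ) : (c • w⁻¹) ⬝ᵥ w⁻¹ = L * (c / |w i₀| ^ 2) := by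
    have hterm (i) : c * (w i)⁻¹ * (w i)⁻¹ = c / |w i₀| ^ 2 := by
      rw [← hsq i, mul_assoc, ← sq, inv_pow, div_eq_mul_inv]
    simp [dotProduct, hterm]
  rw [hessianMatrix_scalarLoss_of_isLocalMin hw hne, charpoly_vecMulVec_add_scalar, hdot,
    Fintype.card_fin, hprodSq, mul_prod_eq_of_isLocalMin_scalarLoss hw i₀, hsq]
  congr 3
  field_simp
  ring

end ScalarLoss

section BalancedLoss

/-- The loss of a factorization into `L` factors of common modulus `ρ` whose product has the
sign of the target, where `M` is the modulus of the target. -/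
noncomputable def balancedLoss (M lam : ℝ) (L : ℕ) (ρ : ℝ) : ℝ :=
  (M - ρ ^ L) ^ 2 + lam * ρ ^ 2

variable {M m lam ρ : ℝ} {L : ℕ} {w : Fin L → ℝ}

lemma scalarLoss_eq_balancedLoss (hL : L ≠ 0) (hρ : ∀ i, |w i| = ρ)
    (hsign : 0 ≤ m * ∏ i, w i) : scalarLoss m lam L w = balancedLoss |m| lam L ρ := by
  have hprod : |∏ i, w i| = ρ ^ L := by simp [abs_prod, hρ]
  have hsum : ∑ i, w i ^ 2 = L * ρ ^ 2 := by simp [← sq_abs (w _), hρ]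
  have hcross : |m| * ρ ^ L = m * ∏ i, w i := by rw [← hprod, ← abs_mul, abs_of_nonneg hsign]
  have hreg : lam / L * (L * ρ ^ 2) = lam * ρ ^ 2 := by field_simp
  rw [scalarLoss, balancedLoss, hsum, hreg, sub_sq, sub_sq, sq_abs, ← hprod, sq_abs, hprod]
  linear_combination 2 * hcross

lemma exists_scalarLoss_eq_balancedLoss (m lam : ℝ) (hL : L ≠ 0) (hρ : 0 ≤ ρ) :
    ∃ v, scalarLoss m lam L v = balancedLoss |m| lam L ρ := by
  obtain ⟨σ, hσ, hσm⟩ : ∃ σ : ℝ, |σ| = 1 ∧ m * σ = |m| := by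
    rcases abs_choice m with h | h
    · exact ⟨1, abs_one, by rw [h, mul_one]⟩
    · exact ⟨-1, by simp, by rw [h, mul_neg_one]⟩
  let i₀ : Fin L := ⟨0, Nat.pos_of_ne_zero hL⟩
  refine ⟨fun i => ρ * (Pi.mulSingle i₀ σ : Fin L → ℝ) i,
    scalarLoss_eq_balancedLoss hL (fun i => ?_) ?_⟩
  · by_cases hi : i = i₀ <;> simp [hi, hσ, abs_of_nonneg hρ]
  · rw [prod_mul_distrib, Fintype.prod_pi_mulSingle', mul_left_comm, hσm]
    positivity

lemma scalarLoss_eq_balancedLoss_abs_of_isLocalMin (hlam : 0 < lam)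
    (hw : IsLocalMin (scalarLoss m lam L) w) (i : Fin L) :
    scalarLoss m lam L w = balancedLoss |m| lam L |w i| :=
  scalarLoss_eq_balancedLoss i.pos.ne'
    (fun j => abs_eq_abs_of_isLocalMin_scalarLoss hlam.ne' hw j i)
    (mul_prod_nonneg_of_isLocalMin_scalarLoss hlam.le hw i)

lemma isMinOn_balancedLoss_abs (hlam : 0 < lam)
    (hw : ∀ v, scalarLoss m lam L w ≤ scalarLoss m lam L v) (i : Fin L) :
    IsMinOn (balancedLoss |m| lam L) (Set.Ici 0) |w i| := by
  intro ρ hρ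
  obtain ⟨v, hv⟩ := exists_scalarLoss_eq_balancedLoss m lam i.pos.ne' hρ
  change balancedLoss |m| lam L |w i| ≤ balancedLoss |m| lam L ρ
  rw [← hv, ← scalarLoss_eq_balancedLoss_abs_of_isLocalMin hlam (.of_forall hw) i]
  exact hw v

lemma strictConvexOn_balancedLoss_sub_div_pow (hL : L ≠ 0) (hlam : 0 ≤ lam) {c : ℝ}
    (hc : c < M ^ 2) :
    StrictConvexOn ℝ (Set.Ioi 0) fun x => (balancedLoss M lam L x - c) / x ^ L := by
  have hinv : StrictConvexOn ℝ (Set.Ioi 0) fun x : ℝ => (M ^ 2 - c) * x ^ (-L : ℤ) :=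
    strictConvexOn_const_mul (strictConvexOn_zpow (by omega) (by omega)) (sub_pos.2 hc)
  have hreg : ConvexOn ℝ (Set.Ioi 0) fun x : ℝ => lam * x ^ (2 - L : ℤ) :=
    (convexOn_zpow _).smul hlam
  refine (((hinv.add_convexOn (convexOn_zpow L)).add_convexOn hreg).add_const (-2 * M)).congr ?_
  intro x (hx : 0 < x)
  simp only [Pi.add_apply, balancedLoss, _root_.zpow_neg, zpow_sub₀ hx.ne', zpow_natCast,
    zpow_ofNat]
  field_simp
  ring

lemma eq_of_isMinOn_balancedLoss (hL : L ≠ 0) (hlam : 0 ≤ lam) {a b : ℝ} (ha : 0 < a)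
    (hb : 0 < b) (ha_min : IsMinOn (balancedLoss M lam L) (Set.Ioi 0) a)
    (hb_min : IsMinOn (balancedLoss M lam L) (Set.Ioi 0) b)
    (ha_lt : balancedLoss M lam L a < M ^ 2) : a = b := by
  have hab : balancedLoss M lam L b = balancedLoss M lam L a :=
    le_antisymm (hb_min ha) (ha_min hb)
  have hmin {x : ℝ} (hx : balancedLoss M lam L x = balancedLoss M lam L a) : IsMinOn
      (fun y => (balancedLoss M lam L y - balancedLoss M lam L a) / y ^ L) (Set.Ioi 0) x := by
    intro y (hy : 0 < y)
    have hle : balancedLoss M lam L a ≤ balancedLoss M lam L y := ha_min hy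
    simpa [hx] using div_nonneg (sub_nonneg.2 hle) (pow_pos hy L).le
  exact (strictConvexOn_balancedLoss_sub_div_pow hL hlam ha_lt).eq_of_isMinOn
    (hmin rfl) (hmin hab) ha hb

end BalancedLoss

section Threshold

variable {M m lam q ρ : ℝ} {L : ℕ}

lemma balancedLoss_lt_sq_iff (hρ : 0 < ρ) :
    balancedLoss M lam L ρ < M ^ 2 ↔ (ρ ^ L + lam * ρ ^ 2 / ρ ^ L) / 2 < M := by
  have hfactor : M ^ 2 - balancedLoss M lam L ρ =
      2 * ρ ^ L * (M - (ρ ^ L + lam * ρ ^ 2 / ρ ^ L) / 2) := by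
    rw [balancedLoss]
    field_simp
    ring
  rw [← sub_pos, hfactor, mul_pos_iff_of_pos_left (by positivity), sub_pos]

-- The witness is the minimizer of `p ↦ (p + λ * p ^ (q - 1)) / 2`.
lemma exists_add_mul_rpow_div_eq (hlam : 0 < lam) (hq : q < 1) :
    ∃ p : ℝ, 0 < p ∧ (p + lam * p ^ q / p) / 2 =
      (1 - q / 2) * lam ^ (1 / (2 - q)) * (1 - q) ^ ((q - 1) / (2 - q)) := by
  have hq₁ : 0 < 1 - q := sub_pos.2 hq
  have hq₂ : 0 < 2 - q := by linarith
  set p : ℝ := (lam * (1 - q)) ^ (1 / (2 - q)) with hp_def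
  have hp : 0 < p := by positivity
  refine ⟨p, hp, ?_⟩
  have hstat : lam * (1 - q) * p ^ q = p ^ 2 := by
    have hpow : p ^ (2 - q) = lam * (1 - q) := by
      rw [hp_def, ← Real.rpow_mul (by positivity), one_div_mul_cancel hq₂.ne', Real.rpow_one]
    rw [← hpow, ← Real.rpow_add hp, sub_add_cancel, Real.rpow_two]
  have hsplit : p = lam ^ (1 / (2 - q)) * ((1 - q) ^ ((q - 1) / (2 - q)) * (1 - q)) := by
    rw [hp_def, Real.mul_rpow hlam.le hq₁.le, ← Real.rpow_add_one hq₁.ne']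
    congr 2
    field_simp
    ring
  calc (p + lam * p ^ q / p) / 2
      = (1 - q / 2) * (p / (1 - q)) := by
        field_simp
        linear_combination hstat
    _ = _ := by
        rw [hsplit]
        field_simp

lemma exists_scalarLoss_lt_scalarLoss_zero (hL : 3 ≤ L) (hlam : 0 < lam) (hq : q = 2 / L)
    (hm : (1 - q / 2) * lam ^ (1 / (2 - q)) * (1 - q) ^ ((q - 1) / (2 - q)) < |m|) :
    ∃ v, scalarLoss m lam L v < scalarLoss m lam L 0 := by
  have hL₀ : L ≠ 0 := by omega
  have hL₂ : (2 : ℝ) < L := by exact_mod_cast hL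
  have hq_lt : q < 1 := by rwa [hq, div_lt_one (by linarith)]
  obtain ⟨p, hp, hp_eq⟩ := exists_add_mul_rpow_div_eq hlam hq_lt
  have hρ : 0 < p ^ (L⁻¹ : ℝ) := by positivity
  have hpow : (p ^ (L⁻¹ : ℝ)) ^ L = p := Real.rpow_inv_natCast_pow hp.le hL₀
  have hsq : (p ^ (L⁻¹ : ℝ)) ^ 2 = p ^ q := by
    rw [← Real.rpow_mul_natCast hp.le, hq]
    congr 1
    field_simp
    norm_num
  obtain ⟨v, hv⟩ := exists_scalarLoss_eq_balancedLoss m lam hL₀ hρ.le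
  refine ⟨v, ?_⟩
  rw [hv, scalarLoss_zero hL₀, ← sq_abs m, balancedLoss_lt_sq_iff hρ, hpow, hsq, hp_eq]
  exact hm

end Threshold

lemma apply_ne_zero_of_forall_scalarLoss_le {m lam : ℝ} {L : ℕ} {w : Fin L → ℝ} (hlam : lam ≠ 0)
    (hm : ∃ v, scalarLoss m lam L v < scalarLoss m lam L 0)
    (hw : ∀ v, scalarLoss m lam L w ≤ scalarLoss m lam L v) (i : Fin L) : w i ≠ 0 := by
  intro hi
  obtain ⟨v, hv⟩ := hm
  have hw_zero : w = 0 := funext fun j => by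
    simpa [hi] using abs_eq_abs_of_isLocalMin_scalarLoss hlam (.of_forall hw) j i
  exact hv.not_ge (hw_zero ▸ hw v)

lemma abs_apply_eq_of_forall_scalarLoss_le {m lam : ℝ} {L : ℕ} {w₁ w₂ : Fin L → ℝ}
    (hlam : 0 < lam) (hm : ∃ v, scalarLoss m lam L v < scalarLoss m lam L 0)
    (hw₁ : ∀ v, scalarLoss m lam L w₁ ≤ scalarLoss m lam L v)
    (hw₂ : ∀ v, scalarLoss m lam L w₂ ≤ scalarLoss m lam L v) (i : Fin L) :
    |w₁ i| = |w₂ i| := by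
  have hL : L ≠ 0 := i.pos.ne'
  have hlt : balancedLoss |m| lam L |w₁ i| < |m| ^ 2 := by
    obtain ⟨v, hv⟩ := hm
    rw [sq_abs, ← scalarLoss_zero (lam := lam) hL,
      ← scalarLoss_eq_balancedLoss_abs_of_isLocalMin hlam (.of_forall hw₁) i]
    exact (hw₁ v).trans_lt hv
  exact eq_of_isMinOn_balancedLoss hL hlam.le
    (abs_pos.2 (apply_ne_zero_of_forall_scalarLoss_le hlam.ne' hm hw₁ i))
    (abs_pos.2 (apply_ne_zero_of_forall_scalarLoss_le hlam.ne' hm hw₂ i))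
    ((isMinOn_balancedLoss_abs hlam hw₁ i).on_subset Set.Ioi_subset_Ici_self)
    ((isMinOn_balancedLoss_abs hlam hw₂ i).on_subset Set.Ioi_subset_Ici_self) hlt

theorem stmt4_general (L : ℕ) (hL : 0 < L) (lam : ℝ) (hlam : 0 < lam) (m : ℝ)
    (hm : ∃ v, scalarLoss m lam L v < scalarLoss m lam L 0) :
    (∀ w₁ w₂ : Fin L → ℝ,
      (∀ w, scalarLoss m lam L w₁ ≤ scalarLoss m lam L w) →
      (∀ w, scalarLoss m lam L w₂ ≤ scalarLoss m lam L w) →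
      |w₁ ⟨0, hL⟩| = |w₂ ⟨0, hL⟩|) ∧
    (∀ wstar : Fin L → ℝ,
      (∀ w, scalarLoss m lam L wstar ≤ scalarLoss m lam L w) →
      (hessianMatrix (scalarLoss m lam L) wstar).charpoly =
        (X - C (4 * lam / L)) ^ (L - 1) *
          (X - C (2 * L * |wstar ⟨0, hL⟩| ^ (2 * L - 2) + 4 * lam / L - 2 * lam))) :=
  ⟨fun _ _ hw₁ hw₂ => abs_apply_eq_of_forall_scalarLoss_le hlam hm hw₁ hw₂ _,
    fun _ hw => charpoly_hessianMatrix_scalarLoss_of_isLocalMin hlam.ne' (.of_forall hw)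
      (apply_ne_zero_of_forall_scalarLoss_le hlam.ne' hm hw _)⟩

/-- For `L ≥ 3`, `λ > 0`, `q = 2/L`, and `|m| > τ` with
`τ = (1 − q/2)·λ^{1/(2−q)}·(1 − q)^{(q−1)/(2−q)}`: the value `w = |w*_1|` is
the same for all global minimizers `w*` of `𝓛`, and at any global minimizer
the Hessian of `𝓛` has characteristic polynomial
`(x − 4λ/L)^{L−1}·(x − (2L·w^{2L−2} + 4λ/L − 2λ))`, i.e. eigenvalue `4λ/L`
with multiplicity `L − 1` and eigenvalue `2L·w^{2L−2} + 4λ/L − 2λ` with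
multiplicity `1`; so the Hessian spectrum is constant across global minimizers. -/
theorem stmt4 (L : ℕ) (hL : 3 ≤ L) (lam : ℝ) (hlam : 0 < lam) (m q τ : ℝ)
    (hq : q = 2 / L)
    (hτ : τ = (1 - q / 2) * lam ^ (1 / (2 - q)) * (1 - q) ^ ((q - 1) / (2 - q)))
    (hm : τ < |m|) :
    (∀ w₁ w₂ : Fin L → ℝ,
      (∀ w : Fin L → ℝ, scalarLoss m lam L w₁ ≤ scalarLoss m lam L w) →
      (∀ w : Fin L → ℝ, scalarLoss m lam L w₂ ≤ scalarLoss m lam L w) →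
      |w₁ ⟨0, by omega⟩| = |w₂ ⟨0, by omega⟩|) ∧
    (∀ wstar : Fin L → ℝ,
      (∀ w : Fin L → ℝ, scalarLoss m lam L wstar ≤ scalarLoss m lam L w) →
      (Matrix.of fun j k : Fin L =>
          deriv (fun s : ℝ => deriv (fun t : ℝ =>
            scalarLoss m lam L (wstar + s • (Pi.single j 1 : Fin L → ℝ) + t • (Pi.single k 1 : Fin L → ℝ))) 0) 0).charpoly
        = (Polynomial.X - Polynomial.C (4 * lam / L)) ^ (L - 1) *
          (Polynomial.X - Polynomial.C
            (2 * L * |wstar ⟨0, by omega⟩| ^ (2 * L - 2) + 4 * lam / L - 2 * lam))) := by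
  exact stmt4_general L (by omega) lam hlam m
    (exists_scalarLoss_lt_scalarLoss_zero hL hlam hq (hτ ▸ hm))
end
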